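/- Let V = ℂ[X] ⊗[ℂ] ℂ², let E, F be the operators on ℂ[X] given by F(p) = X·p, E(p) = −p′ − X·p″ (the λ = −1 Verma realization), and let e = !![0,1;0,0], f = !![0,0;1,0] act on ℂ² with standard basis u₁ = (1,0), u₋₁ = (0,1). Define K = (E∘F + F∘E) ⊗ 1 + 2(E ⊗ f + F ⊗ e) + 1 ⊗ (e·f + f·e) on V. Then for every integer k ≥ 1, the vectors w₁ = X^k ⊗ u₁ + k·X^{k-1} ⊗ u₋₁ and w₂ = X^{k-1} ⊗ u₋₁ satisfy K(w₁) = −2k²·w₁ and K(w₂) = 2·w₁ − 2k²·w₂. -/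

import Mathlib

open Polynomial TensorProduct Matrix

noncomputable section

/-- `F p = X * p` as a linear map on `ℂ[X]`. -/
def Fop : Polynomial ℂ →ₗ[ℂ] Polynomial ℂ := LinearMap.mulLeft ℂ (X : Polynomial ℂ)

/-- `E p = -p' - X * p''` (the `λ = -1` Verma realization) as a linear map. -/
def Eop : Polynomial ℂ →ₗ[ℂ] Polynomial ℂ :=
  (-1 : ℂ) • (derivative : Polynomial ℂ →ₗ[ℂ] Polynomial ℂ) -
    LinearMap.mulLeft ℂ (X : Polynomial ℂ) ∘ₗ
      (derivative : Polynomial ℂ →ₗ[ℂ] Polynomial ℂ) ∘ₗ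
        (derivative : Polynomial ℂ →ₗ[ℂ] Polynomial ℂ)

/-- the matrix `e = !![0,1;0,0]` acting on `ℂ²`. -/
def eop : (Fin 2 → ℂ) →ₗ[ℂ] (Fin 2 → ℂ) := Matrix.toLin' !![0, 1; 0, 0]

/-- the matrix `f = !![0,0;1,0]` acting on `ℂ²`. -/
def fop : (Fin 2 → ℂ) →ₗ[ℂ] (Fin 2 → ℂ) := Matrix.toLin' !![0, 0; 1, 0]

/-- The action `K = δ(κ) = κ⊗1 + 2(E⊗f + F⊗e) + 1⊗κ` on `V = ℂ[X] ⊗ ℂ²`. -/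
def K : Polynomial ℂ ⊗[ℂ] (Fin 2 → ℂ) →ₗ[ℂ] Polynomial ℂ ⊗[ℂ] (Fin 2 → ℂ) :=
  TensorProduct.map (Eop ∘ₗ Fop + Fop ∘ₗ Eop) LinearMap.id +
    (2 : ℂ) • (TensorProduct.map Eop fop + TensorProduct.map Fop eop) +
      TensorProduct.map LinearMap.id (eop ∘ₗ fop + fop ∘ₗ eop)

def u₁ : Fin 2 → ℂ := ![1, 0]
def uNeg : Fin 2 → ℂ := ![0, 1]

theorem Fop_pow (n : ℕ) : Fop (X ^ n) = X ^ (n + 1) := by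
  simp [Fop, pow_succ']

theorem Eop_zero : Eop (X ^ 0) = 0 := by
  simp [Eop]

theorem Eop_succ (n : ℕ) : Eop (X ^ (n + 1)) = (-((n : ℂ) + 1) ^ 2) • X ^ n := by
  cases n with
  | zero => simp [Eop]
  | succ m =>
    simp only [Eop, LinearMap.sub_apply, LinearMap.smul_apply, LinearMap.comp_apply,
      LinearMap.mulLeft_apply, derivative_X_pow, derivative_mul, derivative_C, smul_eq_C_mul]
    simp
    ring

theorem FE_pow (n : ℕ) : Fop (Eop (X ^ n)) = (-(n : ℂ) ^ 2) • X ^ n := by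
  cases n with
  | zero => rw [Eop_zero]; simp
  | succ m => rw [Eop_succ, map_smul, Fop_pow]; push_cast; rfl

theorem eop_u : eop u₁ = 0 := by
  ext i; fin_cases i <;> simp [eop, u₁]
theorem eop_n : eop uNeg = u₁ := by
  ext i; fin_cases i <;> simp [eop, u₁, uNeg]
theorem fop_u : fop u₁ = uNeg := by
  ext i; fin_cases i <;> simp [fop, u₁, uNeg]
theorem fop_n : fop uNeg = 0 := by
  ext i; fin_cases i <;> simp [fop, uNeg]

theorem K_u (n : ℕ) : K ((X ^ (n + 1)) ⊗ₜ[ℂ] u₁) =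
    (-2 * ((n : ℂ) + 1) ^ 2 - 2 * ((n : ℂ) + 1)) • ((X ^ (n + 1)) ⊗ₜ[ℂ] u₁) +
      (-2 * ((n : ℂ) + 1) ^ 2) • ((X ^ n) ⊗ₜ[ℂ] uNeg) := by
  simp only [K, LinearMap.add_apply, LinearMap.smul_apply, TensorProduct.map_tmul,
    LinearMap.comp_apply, LinearMap.id_apply, map_smul, Fop_pow, Eop_succ, eop_u, fop_u, eop_n,
    map_zero, tmul_zero, add_tmul, ← smul_tmul', add_zero]
  push_cast
  module

theorem K_n (n : ℕ) : K ((X ^ n) ⊗ₜ[ℂ] uNeg) =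
    (-2 * ((n : ℂ) + 1) ^ 2 + 2 * ((n : ℂ) + 1)) • ((X ^ n) ⊗ₜ[ℂ] uNeg) +
      (2 : ℂ) • ((X ^ (n + 1)) ⊗ₜ[ℂ] u₁) := by
  simp only [K, LinearMap.add_apply, LinearMap.smul_apply, TensorProduct.map_tmul,
    LinearMap.comp_apply, LinearMap.id_apply, FE_pow, Fop_pow, Eop_succ, eop_n, fop_n, fop_u,
    map_zero, tmul_zero, add_tmul, ← smul_tmul', zero_add]
  module

theorem casimir_jordan_basis (k : ℕ) (hk : 1 ≤ k)
    (w₁ w₂ : Polynomial ℂ ⊗[ℂ] (Fin 2 → ℂ))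
    (hw₁ : w₁ = ((X : Polynomial ℂ) ^ k) ⊗ₜ[ℂ] u₁ +
      (k : ℂ) • (((X : Polynomial ℂ) ^ (k - 1)) ⊗ₜ[ℂ] uNeg))
    (hw₂ : w₂ = ((X : Polynomial ℂ) ^ (k - 1)) ⊗ₜ[ℂ] uNeg) :
    K w₁ = (-2 * (k : ℂ) ^ 2) • w₁ ∧
      K w₂ = (2 : ℂ) • w₁ + (-2 * (k : ℂ) ^ 2) • w₂ := by
  obtain ⟨n, rfl⟩ : ∃ n, k = n + 1 := ⟨k - 1, by omega⟩
  subst hw₁ hw₂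
  simp only [Nat.add_sub_cancel, map_add, map_smul, K_u, K_n]
  push_cast
  constructor <;> module

end
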